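/- Let T be a rooted tree of k nodes and consider a partial assignment of agents produced by the Empty_Node_Selection procedure. Then every empty node of T is within distance 2 (in T) of some node occupied by an agent. -/

import Mathlib

/-- A rooted tree on `k` nodes: node `0` is the root, and every non-root node
has a parent with a smaller index. -/
structure RTree (k : ℕ) where
  parent : Fin k → Fin k
  parent_lt : ∀ i : Fin k, (i : ℕ) ≠ 0 → (parent i : ℕ) < (i : ℕ)
  parent_root : ∀ i : Fin k, (i : ℕ) = 0 → parent i = i

namespace RTree

variable {k : ℕ}

/-- Depth of a node (root has depth 0). -/
def depth (T : RTree k) (i : Fin k) : ℕ :=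
  if h : (i : ℕ) = 0 then 0 else T.depth (T.parent i) + 1
termination_by (i : ℕ)
decreasing_by exact T.parent_lt i h

/-- The children of a node. -/
def children (T : RTree k) (v : Fin k) : Finset (Fin k) :=
  Finset.univ.filter fun c => T.parent c = v ∧ c ≠ v

/-- A leaf is a node with no children. -/
def isLeaf (T : RTree k) (v : Fin k) : Prop := T.children v = ∅

instance (T : RTree k) : DecidablePred T.isLeaf := fun v => by
  unfold isLeaf; infer_instance

/-- The undirected graph underlying the rooted tree. -/
def toGraph (T : RTree k) : SimpleGraph (Fin k) :=
  SimpleGraph.fromRel fun a b => T.parent a = b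

end RTree

/-!
Every non-leaf node of even depth is occupied, and the parent of a node is never a leaf as soon as
the tree has at least two nodes. So from a node of odd depth one step towards the root reaches an
occupied node, and from a node of even depth two steps do. The root is its own parent, which makes
it fit the even case without a separate argument.
-/

namespace RTree

variable {k : ℕ} (T : RTree k)

theorem depth_parent (v : Fin k) : T.depth (T.parent v) = T.depth v - 1 := by
  by_cases hv : (v : ℕ) = 0
  · rw [T.parent_root v hv, depth, dif_pos hv]
  · rw [depth.eq_def T v, dif_neg hv, Nat.add_sub_cancel]

theorem parent_ne_self {v : Fin k} (hv : (v : ℕ) ≠ 0) : T.parent v ≠ v :=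
  Fin.ne_of_lt (T.parent_lt v hv)

theorem mem_children_parent {v : Fin k} (hv : (v : ℕ) ≠ 0) : v ∈ T.children (T.parent v) :=
  Finset.mem_filter.mpr ⟨Finset.mem_univ v, rfl, (T.parent_ne_self hv).symm⟩

theorem not_isLeaf_of_mem_children {v c : Fin k} (hc : c ∈ T.children v) : ¬ T.isLeaf v :=
  Finset.ne_empty_of_mem hc

theorem not_isLeaf_of_eq_zero (hk : 2 ≤ k) {v : Fin k} (hv : (v : ℕ) = 0) : ¬ T.isLeaf v := by
  have parent_one : T.parent ⟨1, hk⟩ = v :=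
    Fin.ext ((Nat.lt_one_iff.mp (T.parent_lt ⟨1, hk⟩ one_ne_zero)).trans hv.symm)
  exact T.not_isLeaf_of_mem_children (parent_one ▸ T.mem_children_parent one_ne_zero)

theorem not_isLeaf_parent (hk : 2 ≤ k) (v : Fin k) : ¬ T.isLeaf (T.parent v) := by
  by_cases hv : (v : ℕ) = 0
  · rw [T.parent_root v hv]
    exact T.not_isLeaf_of_eq_zero hk hv
  · exact T.not_isLeaf_of_mem_children (T.mem_children_parent hv)

theorem adj_parent {v : Fin k} (hv : (v : ℕ) ≠ 0) : T.toGraph.Adj v (T.parent v) :=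
  (SimpleGraph.fromRel_adj _ _ _).mpr ⟨(T.parent_ne_self hv).symm, Or.inl rfl⟩

theorem edist_parent_le_one (v : Fin k) : T.toGraph.edist v (T.parent v) ≤ 1 := by
  rw [SimpleGraph.edist_le_one_iff_adj_or_eq]
  by_cases hv : (v : ℕ) = 0
  · exact Or.inr (T.parent_root v hv).symm
  · exact Or.inl (T.adj_parent hv)

theorem edist_iterate_parent_le (n : ℕ) (v : Fin k) : T.toGraph.edist v (T.parent^[n] v) ≤ n := by
  induction n with
  | zero => exact SimpleGraph.edist_self.le
  | succ n ih =>
    rw [Function.iterate_succ_apply', Nat.cast_succ]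
    exact SimpleGraph.edist_triangle.trans (add_le_add ih (T.edist_parent_le_one _))

end RTree

-- `edist` rather than `dist`, because `dist` is `0` between nodes that no walk connects.
theorem empty_node_selection_distance_two_general {k : ℕ} (hk : 2 ≤ k) (T : RTree k)
    (S : Set (Fin k)) (h_even_nonleaf : ∀ v, Even (T.depth v) → ¬ T.isLeaf v → v ∈ S)
    (v : Fin k) : ∃ u ∈ S, T.toGraph.edist v u ≤ 2 := by
  have parent_mem (w : Fin k) (hw : Even (T.depth w - 1)) : T.parent w ∈ S :=
    h_even_nonleaf _ (T.depth_parent w ▸ hw) (T.not_isLeaf_parent hk w)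
  rcases Nat.even_or_odd (T.depth v) with even_depth | odd_depth
  · have even_depth_grandparent : Even (T.depth (T.parent v) - 1) := by
      rw [T.depth_parent v, Nat.sub_sub]
      exact even_depth.tsub even_two
    exact ⟨_, parent_mem _ even_depth_grandparent, T.edist_iterate_parent_le 2 v⟩
  · exact ⟨_, parent_mem v (odd_depth.tsub_odd odd_one),
      (T.edist_parent_le_one v).trans one_le_two⟩

/-- After the Empty_Node_Selection procedure (same hypotheses on the
occupied set `S` as in its specification), every empty node of the tree is within
graph distance 2 of some occupied node. -/
theorem empty_node_selection_distance_two
    {k : ℕ} (hk : 3 ≤ k) (T : RTree k) (S : Finset (Fin k))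
    (h_even_nonleaf : ∀ v, T.depth v % 2 = 0 → ¬ T.isLeaf v → v ∈ S)
    (h_even_leaf_single : ∀ v, T.depth v % 2 = 0 → T.isLeaf v → (v : ℕ) ≠ 0 →
      ((T.children (T.parent v)).filter (fun c => T.isLeaf c)).card ≤ 1 → v ∈ S)
    (h_odd_count : ∀ w, T.depth w % 2 = 0 →
      ((T.children w).filter (fun c => c ∈ S)).card =
        (if 3 < (T.children w).card then ((T.children w).card - 1) / 3 else 0))
    (h_leaf_group : ∀ w, T.depth w % 2 = 1 →
      1 < ((T.children w).filter (fun c => T.isLeaf c)).card →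
      (((T.children w).filter (fun c => T.isLeaf c)).filter (fun c => c ∈ S)).card =
        (((T.children w).filter (fun c => T.isLeaf c)).card + 2) / 3) :
    ∀ v : Fin k, v ∉ S → ∃ u ∈ S, T.toGraph.dist v u ≤ 2 := by
  intro v _
  obtain ⟨u, hu, h_edist⟩ := empty_node_selection_distance_two_general (by omega) T S
    (fun w hw => h_even_nonleaf w (Nat.even_iff.mp hw)) v
  exact ⟨u, hu, ENat.toNat_le_of_le_natCast h_edist⟩
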